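/- Let k ≥ 3 be an integer. The principal ideal generated by p_k in F[x_1,…,x_k] is a prime ideal, and the quotient ring F[x_1,…,x_k]/(p_k) has Krull dimension k − 1 (equivalently, the zero locus V(p_k) ⊆ F^k is an irreducible affine variety of dimension k − 1). -/

import Mathlib

/-!
Write `n = p - 1` and `M_m = x_1 ⋯ x_m`. Singling out one variable `T` gives the recursion
`p_{m+1} = p_m T^n + M_m^n` (`finSuccEquiv_pk`). This is a binomial in `T` to which Eisenstein's
criterion applies after reversing the coefficients, with respect to a prime `q` dividing `p_m`
exactly once: such a `q` does not divide `M_m`, because no variable divides `p_m`, and for the same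
reason the binomial is primitive.

For `m = 2` we have `p_2 = x^n + y^n`, and `q = x - ζ y` with `ζ^n = -1` works, because `n = -1` is
nonzero in `F`; for `m ≥ 3` the prime `q = p_m` works by induction. Hence `p_k` is prime for `k ≥ 3`.

For the dimension, `dim ≤ k - 1` since `p_k` is a nonzerodivisor. Conversely `p_k` vanishes on the
codimension-two subspace `x_1 = x_2 = 0`, so the domain `F[x]/(p_k)` surjects onto a polynomial ring
in `k - 2` variables with the nonzero class of `x_1` in the kernel, whence `dim ≥ (k - 2) + 1`.
-/

noncomputable section

/-- The polynomial `p_k = ∑_{i=1}^k (x_1 ⋯ x̂_i ⋯ x_k)^{p-1}`. -/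
def pk (F : Type) [Field F] (p k : ℕ) : MvPolynomial (Fin k) F :=
  ∑ i : Fin k, ∏ j ∈ Finset.univ.erase i, (MvPolynomial.X j) ^ (p - 1)

section Binomial

open Polynomial

/-- Reversal preserves irreducibility of polynomials with nonzero constant term; that hypothesis
excludes powers of `X`, whose reverses are units. -/
lemma irreducible_of_irreducible_reverse {R : Type*} [CommRing R] [IsDomain R] {f : R[X]}
    (h0 : f.coeff 0 ≠ 0) (h : Irreducible f.reverse) : Irreducible f := by
  have key : ∀ g : R[X], g.coeff 0 ≠ 0 → IsUnit g.reverse → IsUnit g := by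
    intro g hg hu
    have h1 : g.natTrailingDegree = 0 := natTrailingDegree_eq_zero.mpr (Or.inr hg)
    have h2 := natDegree_eq_zero_of_isUnit hu
    rw [reverse_natDegree, h1, Nat.sub_zero] at h2
    rw [eq_C_of_natDegree_eq_zero h2] at hu ⊢
    simpa using hu
  refine ⟨fun hu => h.not_isUnit ?_, fun a b hab => ?_⟩
  · have hd := natDegree_eq_zero_of_isUnit hu
    rw [eq_C_of_natDegree_eq_zero hd] at hu ⊢
    simpa using hu
  · rw [hab, mul_coeff_zero] at h0
    have := h.isUnit_or_isUnit (by rw [hab, reverse_mul_of_domain])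
    exact this.imp (key a (left_ne_zero_of_mul h0)) (key b (right_ne_zero_of_mul h0))

/-- Eisenstein's criterion, read from the leading coefficient, for the binomial `a T ^ n + b`. -/
lemma irreducible_binomial {R : Type*} [CommRing R] [IsDomain R] {a b q : R} {n : ℕ} (hn : 0 < n)
    (hq : Prime q) (hqa : q ∣ a) (hqa2 : ¬ q ^ 2 ∣ a) (hqb : ¬ q ∣ b) (hab : IsRelPrime a b) :
    Irreducible (X ^ n * C a + C b) := by
  have ha : a ≠ 0 := fun h => hqa2 (h ▸ dvd_zero _)
  have hb : b ≠ 0 := fun h => hqb (h ▸ dvd_zero _)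
  have hrev : (X ^ n * C a + C b).reverse = C b * X ^ n + C a := by
    have hd : (C a * X ^ n + C b).natDegree = n := by
      rw [natDegree_add_C, natDegree_C_mul_X_pow n a ha]
    rw [mul_comm, reverse, hd, reflect_add, reflect_C_mul_X_pow, reflect_C,
      revAt_le le_rfl, Nat.sub_self, pow_zero, mul_one, add_comm]
  apply irreducible_of_irreducible_reverse
  · simpa [hn.ne] using hb
  rw [hrev]
  have hdeg : (C b * X ^ n + C a).degree = (n : WithBot ℕ) := by
    rw [degree_add_C (by rw [degree_C_mul_X_pow n hb]; exact_mod_cast hn),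
      degree_C_mul_X_pow n hb]
  have hnat : (C b * X ^ n + C a).natDegree = n := natDegree_eq_of_degree_eq_some hdeg
  refine irreducible_of_eisenstein_criterion (P := Ideal.span {q})
    ((Ideal.span_singleton_prime hq.ne_zero).mpr hq) ?_ ?_ ?_ ?_ ?_
  · rw [leadingCoeff, hnat, Ideal.mem_span_singleton]
    simpa [coeff_C, hn.ne'] using hqb
  · intro i hi
    rw [hdeg, Nat.cast_lt] at hi
    rw [Ideal.mem_span_singleton, coeff_add, coeff_C_mul, coeff_X_pow, if_neg hi.ne, mul_zero,
      zero_add, coeff_C]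
    split_ifs
    · exact hqa
    · exact dvd_zero _
  · rw [hdeg]; exact_mod_cast hn
  · rw [Ideal.span_singleton_pow, Ideal.mem_span_singleton]
    simpa [hn.ne] using hqa2
  · intro r hr
    rw [C_dvd_iff_dvd_coeff] at hr
    refine hab ?_ ?_
    · simpa [hn.ne] using hr 0
    · simpa [coeff_C, hn.ne'] using hr n

end Binomial

open MvPolynomial

lemma pk_eq_prod_ite (F : Type) [Field F] (p k : ℕ) :
    pk F p k = ∑ i : Fin k, ∏ j : Fin k, if j = i then 1 else (X j) ^ (p - 1) := by
  refine Finset.sum_congr rfl fun i _ => ?_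
  rw [← Finset.mul_prod_erase _ _ (Finset.mem_univ i), if_pos rfl, one_mul]
  exact Finset.prod_congr rfl fun j hj => (if_neg (Finset.ne_of_mem_erase hj)).symm

/-- The recursion `p_{m+1} = p_m T ^ (p-1) + (x_1 ⋯ x_m) ^ (p-1)`, where `T` is the first
variable. -/
lemma finSuccEquiv_pk (F : Type) [Field F] (p m : ℕ) :
    finSuccEquiv F m (pk F p (m + 1)) =
      Polynomial.X ^ (p - 1) * Polynomial.C (pk F p m) +
        Polynomial.C (∏ j : Fin m, X j ^ (p - 1)) := by
  rw [pk_eq_prod_ite, pk_eq_prod_ite, Fin.sum_univ_succ, add_comm (∏ j, _), map_add, map_sum]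
  congr 1
  · rw [map_sum, Finset.mul_sum]
    refine Finset.sum_congr rfl fun i _ => ?_
    rw [Fin.prod_univ_succ, if_neg (Fin.succ_ne_zero i).symm, map_mul, map_pow,
      finSuccEquiv_X_zero, map_prod, map_prod]
    congr 1
    refine Finset.prod_congr rfl fun j _ => ?_
    simp only [Fin.succ_inj]
    split_ifs
    · simp
    · rw [map_pow, finSuccEquiv_X_succ, map_pow]
  · rw [Fin.prod_univ_succ, if_pos rfl, one_mul, map_prod, map_prod]
    refine Finset.prod_congr rfl fun j _ => ?_
    rw [if_neg (Fin.succ_ne_zero j), map_pow, finSuccEquiv_X_succ, map_pow]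

/-- At the point with `j`-th coordinate `0` and all others `1`, the variable `x_j` vanishes while
`p_k` takes the value `1`. -/
lemma not_X_dvd_pk (F : Type) [Field F] {p k : ℕ} (hp : 0 < p - 1) (j : Fin k) :
    ¬ X j ∣ pk F p k := by
  intro h
  have h2 := map_dvd (eval (fun l : Fin k => if l = j then (0 : F) else 1)) h
  rw [eval_X, if_pos rfl, zero_dvd_iff, pk, map_sum, Finset.sum_eq_single j] at h2
  · rw [map_prod, Finset.prod_eq_zero_iff] at h2
    obtain ⟨l, hl, hl2⟩ := h2
    rw [map_pow, eval_X, if_neg (Finset.ne_of_mem_erase hl), one_pow] at hl2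
    exact one_ne_zero hl2
  · intro i _ hij
    rw [map_prod]
    exact Finset.prod_eq_zero (i := j) (by simp [hij.symm]) (by simp [hp.ne'])
  · simp

lemma not_dvd_prod_of_dvd_pk (F : Type) [Field F] {p k : ℕ} (hp : 0 < p - 1)
    {q : MvPolynomial (Fin k) F} (hq : Prime q) (hqp : q ∣ pk F p k) :
    ¬ q ∣ ∏ j : Fin k, (X j : MvPolynomial (Fin k) F) ^ (p - 1) := by
  intro h
  obtain ⟨j, -, hj⟩ := hq.exists_mem_finset_dvd h
  have hass := hq.associated_of_dvd X_prime (hq.dvd_of_dvd_pow hj)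
  exact not_X_dvd_pk F hp j (hass.symm.dvd.trans hqp)

/-- The inductive step: a prime dividing `p_m` exactly once makes `p_{m+1}` prime. -/
lemma prime_pk_succ (F : Type) [Field F] {p m : ℕ} (hp : 0 < p - 1)
    (h : ∃ q, Prime q ∧ q ∣ pk F p m ∧ ¬ q ^ 2 ∣ pk F p m) : Prime (pk F p (m + 1)) := by
  obtain ⟨q, hq, hqp, hqp2⟩ := h
  rw [← MulEquiv.prime_iff (finSuccEquiv F m), finSuccEquiv_pk]
  refine (irreducible_binomial hp hq hqp hqp2 (not_dvd_prod_of_dvd_pk F hp hq hqp) ?_).prime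
  have h0 : pk F p m ≠ 0 := fun h => hqp2 (h ▸ dvd_zero _)
  intro r hr1 hr2
  by_contra hu
  obtain ⟨s, hs, hsr⟩ := WfDvdMonoid.exists_irreducible_factor hu (ne_zero_of_dvd_ne_zero h0 hr1)
  exact not_dvd_prod_of_dvd_pk F hp hs.prime (hsr.trans hr1) (hsr.trans hr2)

/-- The base case: `x - ζ y` with `ζ ^ (p-1) = -1` divides `p_2 = x ^ (p-1) + y ^ (p-1)` exactly
once, as the partial derivative in `x` does not vanish at `(ζ, 1)`. -/
lemma exists_prime_dvd_pk_two (F : Type) [Field F] [IsAlgClosed F] {p : ℕ} (hp : 0 < p - 1)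
    (hpF : ((p - 1 : ℕ) : F) ≠ 0) :
    ∃ q, Prime q ∧ q ∣ pk F p 2 ∧ ¬ q ^ 2 ∣ pk F p 2 := by
  obtain ⟨ζ, hζ⟩ := IsAlgClosed.exists_pow_nat_eq (-1 : F) hp
  have hpk : pk F p 2 = X 0 ^ (p - 1) + X 1 ^ (p - 1) := by
    rw [pk_eq_prod_ite]
    simp [Fin.sum_univ_two, Fin.prod_univ_two, add_comm]
  refine ⟨X 0 - C ζ * X 1, ?_, ?_, ?_⟩
  · have hX1 : finSuccEquiv F 1 (X 1) = Polynomial.C (X 0) := finSuccEquiv_X_succ (j := 0)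
    have hC : finSuccEquiv F 1 (C ζ) = Polynomial.C (C ζ) := by
      simp [finSuccEquiv_apply]
    rw [← MulEquiv.prime_iff (finSuccEquiv F 1), map_sub, map_mul, finSuccEquiv_X_zero, hX1, hC,
      ← Polynomial.C_mul]
    exact Polynomial.prime_X_sub_C _
  · have := sub_dvd_pow_sub_pow (X 0 : MvPolynomial (Fin 2) F) (C ζ * X 1) (p - 1)
    rwa [mul_pow, ← C_pow, hζ, C_neg, C_1, neg_one_mul, sub_neg_eq_add, ← hpk] at this
  · rintro ⟨g, hg⟩
    have hd := congrArg (fun f => eval ![ζ, 1] (pderiv 0 f)) (hpk.symm.trans hg)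
    simp [pderiv_X, pow_two] at hd
    have hζ0 : ζ ≠ 0 := by
      rintro rfl
      rw [zero_pow hp.ne'] at hζ
      exact one_ne_zero (neg_eq_zero.mp hζ.symm)
    rcases hd with hd | hd
    · exact hpF hd
    · exact hζ0 hd.1

lemma prime_pk (F : Type) [Field F] [IsAlgClosed F] {p : ℕ} (hp : 0 < p - 1)
    (hpF : ((p - 1 : ℕ) : F) ≠ 0) {k : ℕ} (hk : 3 ≤ k) : Prime (pk F p k) := by
  induction k, hk using Nat.le_induction with
  | base => exact prime_pk_succ F hp (exists_prime_dvd_pk_two F hp hpF)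
  | succ m _ ih =>
    refine prime_pk_succ F hp ⟨_, ih, dvd_rfl, fun h => ih.not_isUnit ?_⟩
    rw [pow_two] at h
    exact isUnit_of_dvd_one
      ((mul_dvd_mul_iff_left ih.ne_zero).mp (by simpa using h))

/-- Lemma 2.2 (second part): for `k ≥ 3`, the principal ideal `(p_k)` is prime and the
quotient ring `F[x_1,…,x_k]/(p_k)` has Krull dimension `k - 1`; i.e. the hypersurface
`V(p_k)` is an irreducible affine variety of dimension `k - 1`. -/
theorem pk_prime_krullDim (F : Type) [Field F] [IsAlgClosed F] (p k : ℕ) [Fact p.Prime]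
    [CharP F p] (hk : 3 ≤ k) :
    (Ideal.span {pk F p k}).IsPrime ∧
      ringKrullDim (MvPolynomial (Fin k) F ⧸ Ideal.span {pk F p k}) = (k - 1 : ℕ) := by
  have hp2 := (Fact.out : p.Prime).two_le
  have hp : 0 < p - 1 := by omega
  have hpF : ((p - 1 : ℕ) : F) ≠ 0 := by
    rw [Nat.cast_sub (by omega), CharP.cast_eq_zero]
    simp
  have hprime := prime_pk F hp hpF hk
  have hI : (Ideal.span {pk F p k}).IsPrime :=
    (Ideal.span_singleton_prime hprime.ne_zero).mpr hprime
  refine ⟨hI, le_antisymm ?_ ?_⟩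
  · have h := ringKrullDim_quotient_succ_le_of_nonZeroDivisor
      (mem_nonZeroDivisors_of_ne_zero hprime.ne_zero)
    rw [MvPolynomial.ringKrullDim_of_isNoetherianRing, ringKrullDim_eq_zero_of_field, zero_add,
      Nat.card_fin] at h
    obtain ⟨m, rfl⟩ : ∃ m, k = m + 1 := ⟨k - 1, by omega⟩
    rw [Nat.cast_add, Nat.cast_one] at h
    exact (WithBot.add_le_add_iff_right' WithBot.one_ne_bot (by decide)).mp h
  · obtain ⟨m, rfl⟩ : ∃ m, k = m + 2 := ⟨k - 2, by omega⟩
    -- restriction to the subspace where the first two coordinates vanish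
    let φ : MvPolynomial (Fin (m + 2)) F →ₐ[F] MvPolynomial (Fin m) F :=
      aeval (Fin.cons 0 (Fin.cons 0 X))
    have hφ : φ (pk F p (m + 2)) = 0 := by
      rw [pk, map_sum]
      refine Finset.sum_eq_zero fun i _ => ?_
      rw [map_prod]
      by_cases hi : i = 0
      · exact Finset.prod_eq_zero (i := (0 : Fin (m + 1)).succ) (by simp [hi])
          (by simp [φ, hp.ne', -Fin.succ_zero_eq_one])
      · exact Finset.prod_eq_zero (i := 0) (by simp [Ne.symm hi]) (by simp [φ, hp.ne'])
    have hφs : Function.Surjective φ := by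
      intro f
      refine ⟨rename (fun j => j.succ.succ) f, ?_⟩
      rw [aeval_rename]
      exact aeval_X_left_apply f
    have hle : Ideal.span {pk F p (m + 2)} ≤ RingHom.ker φ.toRingHom := by
      rw [Ideal.span_singleton_le_iff_mem]; exact hφ
    have hx : Ideal.Quotient.mk (Ideal.span {pk F p (m + 2)}) (X 0) ≠ 0 := by
      rw [Ne, Ideal.Quotient.eq_zero_iff_mem, Ideal.mem_span_singleton]
      intro h
      exact not_X_dvd_pk F hp 0 (hprime.associated_of_dvd X_prime h).symm.dvd
    have h := ringKrullDim_succ_le_of_surjective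
      (Ideal.Quotient.lift _ φ.toRingHom hle)
      (Ideal.Quotient.lift_surjective_of_surjective _ _ hφs)
      (mem_nonZeroDivisors_of_ne_zero hx) (by simp [φ])
    rw [MvPolynomial.ringKrullDim_of_isNoetherianRing, ringKrullDim_eq_zero_of_field, zero_add,
      Nat.card_fin] at h
    simpa using h

end
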